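/- arXiv:2505.18287 — 6 statements merged into one kernel-verified Lean document; each statement's English description precedes it below -/
import Mathlib

section
/- (Correctness of the reduction from Util-β-SCE with f = 1 to Weighted Set Packing.) Let m, τ, k, η be natural numbers with k ≥ 1 and τ ≥ 1, and let β : Finset (Fin m) → ℕ be a committee scoring function. Then the following are equivalent: (i) there exists a consecutive 1-frequency committee series W : Fin τ → Finset (Fin m) with committee size k and utilitarian quality ∑ i, β (W i) ≥ η; (ii) there exists a Finset 𝒮 of committees with 𝒮.card = τ, whose members are pairwise disjoint, each of cardinality k, and ∑_{S ∈ 𝒮} β S ≥ η. -/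
/-!
Frequency at most one says that committees with different indices share no candidate, and then
consecutiveness is automatic. Pairwise disjoint nonempty committees are distinct, so a 1-frequency
series is the same thing as an enumeration of a packing; summing over the series or over the
packing gives the same total score.
-/

/-- A committee series `W` of length `τ` over candidates `Fin m` is a consecutive
`f`-frequency series if every candidate belongs to at most `f` committees and the
set of indices of committees containing the candidate is consecutive. -/
def ConsecutiveFrequency {m τ : ℕ} (f : ℕ) (W : Fin τ → Finset (Fin m)) : Prop :=
  ∀ c : Fin m,
    (Finset.univ.filter (fun i => c ∈ W i)).card ≤ f ∧
    ∀ a b x : Fin τ, c ∈ W a → c ∈ W b → a ≤ x → x ≤ b → c ∈ W x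

open Function

theorem pairwise_disjoint_iff_card_filter_mem_le_one {ι α : Type*} [Fintype ι] [DecidableEq α]
    {W : ι → Finset α} :
    Pairwise (Disjoint on W) ↔ ∀ c, (Finset.univ.filter (fun i => c ∈ W i)).card ≤ 1 := by
  simp only [Finset.card_le_one, Finset.mem_filter_univ]
  constructor
  · intro hW c i hi j hj
    exact hW.eq (Finset.not_disjoint_iff.mpr ⟨c, hi, hj⟩)
  · intro hW i j hij
    exact Finset.disjoint_left.mpr fun c hi hj => hij (hW c i hi j hj)

theorem consecutiveFrequency_one_iff_pairwise_disjoint {m τ : ℕ}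
    {W : Fin τ → Finset (Fin m)} :
    ConsecutiveFrequency 1 W ↔ Pairwise (Disjoint on W) := by
  rw [pairwise_disjoint_iff_card_filter_mem_le_one]
  refine forall_congr' fun c => and_iff_left_of_imp fun hc a b x ha hb hax hxb => ?_
  have hab : a = b := Finset.card_le_one.mp hc a (by simpa using ha) b (by simpa using hb)
  have hxa : x = a := le_antisymm (hab ▸ hxb) hax
  exact hxa ▸ ha

theorem injective_of_pairwise_disjoint_of_ne_bot {ι γ : Type*} [PartialOrder γ] [OrderBot γ]
    {f : ι → γ} (hf : Pairwise (Disjoint on f)) (hbot : ∀ i, f i ≠ ⊥) : Injective f :=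
  injective_iff_pairwise_ne.mpr fun i _ hij => (hf hij).ne (hbot i)

theorem pairwiseDisjoint_range_embedding_iff {ι γ : Type*} [PartialOrder γ] [OrderBot γ]
    (f : ι ↪ γ) : (Set.range f).PairwiseDisjoint id ↔ Pairwise (Disjoint on f) := by
  rw [← Set.image_univ, f.injective.injOn.pairwiseDisjoint_image]
  exact Set.pairwise_univ

theorem exists_embedding_map_univ_iff {ι γ : Type*} [Fintype ι] {P : Finset γ → Prop} :
    (∃ f : ι ↪ γ, P (Finset.univ.map f)) ↔ ∃ s : Finset γ, s.card = Fintype.card ι ∧ P s := by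
  constructor
  · rintro ⟨f, hf⟩
    exact ⟨_, Finset.card_map f, hf⟩
  · rintro ⟨s, hs, hP⟩
    obtain ⟨f, rfl⟩ := Embedding.exists_of_card_eq_finset hs.symm
    exact ⟨f, hP⟩

theorem util_f_one_iff_weighted_set_packing_general {ι α M : Type*} [Fintype ι]
    [AddCommMonoid M] [LE M] {k : ℕ} {η : M} (hk : 1 ≤ k) (β : Finset α → M) :
    (∃ W : ι → Finset α,
        Pairwise (Disjoint on W) ∧ (∀ i, (W i).card = k) ∧ η ≤ ∑ i, β (W i)) ↔
    (∃ 𝒮 : Finset (Finset α),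
        𝒮.card = Fintype.card ι ∧
        (𝒮 : Set (Finset α)).PairwiseDisjoint id ∧
        (∀ S ∈ 𝒮, S.card = k) ∧
        η ≤ ∑ S ∈ 𝒮, β S) := by
  simp only [← exists_embedding_map_univ_iff, Finset.coe_map, Finset.coe_univ, Set.image_univ,
    pairwiseDisjoint_range_embedding_iff, Finset.forall_mem_map, Finset.mem_univ, forall_const,
    Finset.sum_map]
  constructor
  · rintro ⟨W, hdisj, hcard, hη⟩
    have hne (i : ι) : W i ≠ ⊥ := Finset.card_pos.mp (hk.trans_eq (hcard i).symm) |>.ne_empty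
    exact ⟨⟨W, injective_of_pairwise_disjoint_of_ne_bot hdisj hne⟩, hdisj, hcard, hη⟩
  · rintro ⟨W, hW⟩
    exact ⟨W, hW⟩

/-- Correctness of the reduction from Util-β-SCE with `f = 1` to Weighted Set Packing:
there is a consecutive 1-frequency committee series of length `τ` with committee size `k`
and utilitarian quality at least `η` iff there are `τ` pairwise disjoint size-`k`
committees of total score at least `η`. -/
theorem util_f_one_iff_weighted_set_packing {m τ k η : ℕ}
    (hk : 1 ≤ k) (hτ : 1 ≤ τ) (β : Finset (Fin m) → ℕ) :
    (∃ W : Fin τ → Finset (Fin m),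
        ConsecutiveFrequency 1 W ∧ (∀ i, (W i).card = k) ∧ η ≤ ∑ i, β (W i)) ↔
    (∃ 𝒮 : Finset (Finset (Fin m)),
        𝒮.card = τ ∧
        (∀ S ∈ 𝒮, ∀ T ∈ 𝒮, S ≠ T → S ∩ T = ∅) ∧
        (∀ S ∈ 𝒮, S.card = k) ∧
        η ≤ ∑ S ∈ 𝒮, β S) := by
  simpa only [consecutiveFrequency_one_iff_pairwise_disjoint, Fintype.card_fin,
    Set.PairwiseDisjoint, Set.Pairwise, onFun, id, Finset.mem_coe,
    Finset.disjoint_iff_inter_eq_empty] using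
    util_f_one_iff_weighted_set_packing_general (ι := Fin τ) hk β
end

section
/- (Combinatorial content of the reduction of Egal-β-SCE with frequency f ≥ 2 to frequency 1, BKN Lemma 1, and of the egalitarian FPT(τ) algorithm.) Let m, τ, k, f, η be natural numbers with f ≥ 1, k ≥ 1 and τ ≥ 1, and let β : Finset (Fin m) → ℕ be a committee scoring function. Then the following are equivalent: (i) there exists a consecutive f-frequency committee series W : Fin τ → Finset (Fin m) with committee size k such that β (W i) ≥ η for every i (i.e. whose egalitarian quality is at least η); (ii) there exists a Finset 𝒮 of committees with 𝒮.card = ⌈τ/f⌉ (the least integer at least τ/f, i.e. (τ + f − 1)/f), whose members are pairwise disjoint, each of cardinality k, and with β S ≥ η for every S ∈ 𝒮. -/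
open Function

section ConsecutiveFrequency

variable {ι κ α : Type*}

/-- Consecutive `f`-frequency for a family of committees over any candidate type `α`, indexed by
any preorder `ι`. The index set of a candidate is consecutive when it is order-connected; its size
is measured by `Set.encard`, so that it is finite even when `ι` is not. -/
def IsConsecutiveFrequency [Preorder ι] (f : ℕ) (W : ι → Finset α) : Prop :=
  ∀ c, {i | c ∈ W i}.encard ≤ f ∧ {i | c ∈ W i}.OrdConnected

lemma consecutiveFrequency_iff_isConsecutiveFrequency {m τ f : ℕ} {W : Fin τ → Finset (Fin m)} :
    ConsecutiveFrequency f W ↔ IsConsecutiveFrequency f W := by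
  refine forall_congr' fun c ↦ and_congr ?_ ?_
  · rw [← Nat.cast_le (α := ℕ∞), ← Set.encard_coe_eq_coe_finsetCard, Finset.coe_filter_univ]
  · rw [Set.ordConnected_def]
    exact ⟨fun h a ha b hb x hx ↦ h a b x ha hb hx.1 hx.2,
      fun h a b x ha hb hax hxb ↦ h ha hb ⟨hax, hxb⟩⟩

lemma IsConsecutiveFrequency.disjoint_of_lt_encard_Icc [Preorder ι] {f : ℕ} {W : ι → Finset α}
    (hW : IsConsecutiveFrequency f W) {a b : ι} (hab : f < (Set.Icc a b).encard) :
    Disjoint (W a) (W b) := by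
  refine Finset.disjoint_left.2 fun c hca hcb ↦ hab.not_ge ?_
  exact (Set.encard_le_encard ((hW c).2.out hca hcb)).trans (hW c).1

lemma IsConsecutiveFrequency.disjoint_of_add_le {τ f : ℕ} {W : Fin τ → Finset α}
    (hW : IsConsecutiveFrequency f W) {a b : Fin τ} (hab : (a : ℕ) + f ≤ b) :
    Disjoint (W a) (W b) := by
  apply hW.disjoint_of_lt_encard_Icc
  rw [← Finset.coe_Icc, Set.encard_coe_eq_coe_finsetCard, Fin.card_Icc, Nat.cast_lt]
  omega

lemma isConsecutiveFrequency_comp_monotone [Preorder ι] [PartialOrder κ] {f : ℕ}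
    {V : κ → Finset α} (hV : Pairwise (Disjoint on V)) {g : ι → κ} (hg : Monotone g)
    (hfib : ∀ q, (g ⁻¹' {q}).encard ≤ f) : IsConsecutiveFrequency f (V ∘ g) := by
  intro c
  by_cases hc : ∃ q, c ∈ V q
  · obtain ⟨q, hq⟩ := hc
    have index_set_eq : {i | c ∈ (V ∘ g) i} = g ⁻¹' {q} := by
      ext i
      refine ⟨fun hi ↦ hV.eq (Finset.not_disjoint_iff.2 ⟨c, hi, hq⟩), ?_⟩
      rintro rfl
      exact hq
    rw [index_set_eq]
    exact ⟨hfib q, Set.ordConnected_singleton.preimage_mono hg⟩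
  · have index_set_eq : {i | c ∈ (V ∘ g) i} = ∅ :=
      Set.eq_empty_of_forall_notMem fun i hi ↦ hc ⟨g i, hi⟩
    rw [index_set_eq]
    exact ⟨by simp, Set.ordConnected_empty⟩

end ConsecutiveFrequency

section CeilDiv

lemma lt_ceilDiv_iff_mul_lt {α : Type*} [Semiring α] [LinearOrder α] [CeilDiv α α] {a b c : α}
    (ha : 0 < a) : c < b ⌈/⌉ a ↔ a * c < b :=
  lt_iff_lt_of_le_iff_le (ceilDiv_le_iff_le_mul ha)

lemma div_lt_ceilDiv {a b c : ℕ} (ha : 0 < a) (hcb : c < b) : c / a < b ⌈/⌉ a :=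
  (lt_ceilDiv_iff_mul_lt ha).2 ((Nat.mul_div_le c a).trans_lt hcb)

lemma encard_setOf_div_eq {f : ℕ} (hf : 0 < f) (q : ℕ) : {i : ℕ | i / f = q}.encard = f := by
  have block_eq : {i : ℕ | i / f = q} = Finset.Ico (q * f) (q * f + f) := by
    ext i
    rw [Set.mem_ofPred_eq, Nat.div_eq_iff hf, Finset.coe_Ico, Set.mem_Ico]
    omega
  rw [block_eq, Set.encard_coe_eq_coe_finsetCard, Nat.card_Ico, Nat.add_sub_cancel_left]

end CeilDiv

lemma exists_isConsecutiveFrequency_iff_exists_pairwise_disjoint {α : Type*} {τ f : ℕ}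
    (hf : 0 < f) (P : Finset α → Prop) :
    (∃ W : Fin τ → Finset α, IsConsecutiveFrequency f W ∧ ∀ i, P (W i)) ↔
      ∃ V : Fin (τ ⌈/⌉ f) → Finset α, Pairwise (Disjoint on V) ∧ ∀ j, P (V j) := by
  constructor
  · rintro ⟨W, hW, hP⟩
    let sample (j : Fin (τ ⌈/⌉ f)) : Fin τ := ⟨f * j, (lt_ceilDiv_iff_mul_lt hf).1 j.2⟩
    refine ⟨W ∘ sample, (pairwise_disjoint_on _).2 fun i j hij ↦ ?_, fun j ↦ hP (sample j)⟩
    exact hW.disjoint_of_add_le (Nat.mul_le_mul_left f (Nat.succ_le_of_lt hij))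
  · rintro ⟨V, hV, hP⟩
    let block (i : Fin τ) : Fin (τ ⌈/⌉ f) := ⟨i / f, div_lt_ceilDiv hf i.2⟩
    have block_mono : Monotone block := fun _ _ hij ↦ Nat.div_le_div_right hij
    have encard_block_le (q) : (block ⁻¹' {q}).encard ≤ f := by
      rw [← encard_setOf_div_eq hf q, ← Fin.val_injective.encard_image]
      refine Set.encard_le_encard (Set.image_subset_iff.2 fun i hi ↦ ?_)
      exact congrArg Fin.val hi
    exact ⟨V ∘ block, isConsecutiveFrequency_comp_monotone hV block_mono encard_block_le,
      fun i ↦ hP (block i)⟩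

lemma exists_pairwise_disjoint_iff_exists_finset {γ : Type*} [PartialOrder γ] [OrderBot γ] {n : ℕ}
    {P : γ → Prop} (hP : ∀ a, P a → a ≠ ⊥) :
    (∃ V : Fin n → γ, Pairwise (Disjoint on V) ∧ ∀ j, P (V j)) ↔
      ∃ 𝒮 : Finset γ, 𝒮.card = n ∧ (𝒮 : Set γ).PairwiseDisjoint id ∧ ∀ S ∈ 𝒮, P S := by
  constructor
  · rintro ⟨V, hV, hVP⟩
    have hinj : Injective V := injective_iff_pairwise_ne.2 fun i j hij ↦
      (hV hij).ne (hP _ (hVP i))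
    refine ⟨Finset.univ.map ⟨V, hinj⟩, by simp, ?_, by simpa using hVP⟩
    rw [Finset.coe_map, Finset.coe_univ, Set.image_univ]
    exact hV.range_pairwise
  · rintro ⟨𝒮, hn, hdisj, hSP⟩
    let e : Fin n ≃ 𝒮 := (𝒮.equivFinOfCardEq hn).symm
    refine ⟨fun j ↦ e j, fun i j hij ↦ ?_, fun j ↦ hSP _ (e j).2⟩
    exact hdisj (e i).2 (e j).2 fun h ↦ hij (e.injective (Subtype.ext h))

theorem egal_freq_f_iff_set_packing_general {α : Type*} {τ f : ℕ} (hf : 0 < f)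
    {P : Finset α → Prop} (hP : ∀ S, P S → S.Nonempty) :
    (∃ W : Fin τ → Finset α, IsConsecutiveFrequency f W ∧ ∀ i, P (W i)) ↔
      ∃ 𝒮 : Finset (Finset α), 𝒮.card = τ ⌈/⌉ f ∧
        (𝒮 : Set (Finset α)).PairwiseDisjoint id ∧ ∀ S ∈ 𝒮, P S :=
  (exists_isConsecutiveFrequency_iff_exists_pairwise_disjoint hf P).trans
    (exists_pairwise_disjoint_iff_exists_finset fun S hS ↦ (hP S hS).ne_empty)

/-- Combinatorial content of the reduction of Egal-β-SCE with frequency `f` to frequency 1: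
there is a consecutive `f`-frequency committee series of length `τ` with committee size `k`
in which every committee has score at least `η` iff there are `⌈τ/f⌉` pairwise disjoint
size-`k` committees each of score at least `η`. -/
theorem egal_freq_f_iff_set_packing {m τ k f η : ℕ}
    (hf : 1 ≤ f) (hk : 1 ≤ k) (hτ : 1 ≤ τ) (β : Finset (Fin m) → ℕ) :
    (∃ W : Fin τ → Finset (Fin m),
        ConsecutiveFrequency f W ∧ (∀ i, (W i).card = k) ∧ ∀ i, η ≤ β (W i)) ↔
    (∃ 𝒮 : Finset (Finset (Fin m)),
        𝒮.card = (τ + f - 1) / f ∧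
        (∀ S ∈ 𝒮, ∀ T ∈ 𝒮, S ≠ T → S ∩ T = ∅) ∧
        (∀ S ∈ 𝒮, S.card = k) ∧
        (∀ S ∈ 𝒮, η ≤ β S)) := by
  have hpacking := egal_freq_f_iff_set_packing_general (τ := τ) hf
    (P := fun S ↦ S.card = k ∧ η ≤ β S) fun S hS ↦ Finset.card_pos.1 (hS.1 ▸ hk)
  simpa only [consecutiveFrequency_iff_isConsecutiveFrequency, Nat.ceilDiv_eq_add_pred_div,
    Set.PairwiseDisjoint, Set.Pairwise, onFun, id, Finset.mem_coe,
    Finset.disjoint_iff_inter_eq_empty, forall_and, imp_and] using hpacking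
end

section
/- (Block-repetition construction used in the FPT(m) algorithm and in the reductions between frequencies.) Let m, k, f, τ, d be natural numbers with d ≥ 1, k ≥ 1, f ≥ 1, let S : Fin d → Finset (Fin m) be pairwise disjoint committees each of cardinality k, and let r : Fin d → ℕ satisfy 1 ≤ r i ≤ f for every i and ∑ i, r i = τ. Define W : Fin τ → Finset (Fin m) by W t = S j, where j is the unique index with ∑_{i < j} r i ≤ (t : ℕ) < ∑_{i ≤ j} r i (i.e. W consists of r 0 copies of S 0, followed by r 1 copies of S 1, and so on). Then W is a consecutive f-frequency committee series of length τ with committee size k; moreover its utilitarian quality satisfies ∑ t, β (W t) = ∑ j, (r j) * β (S j), and its egalitarian quality satisfies min over t of β (W t) = min over j of β (S j), for every committee scoring function β. -/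
theorem consecutiveFrequency_comp_of_monotone {m τ f : ℕ} {ι : Type*} [PartialOrder ι]
    [DecidableEq ι] {S : ι → Finset (Fin m)} {φ : Fin τ → ι}
    (hS : Pairwise (Function.onFun Disjoint S)) (hφ : Monotone φ)
    (hcard : ∀ j, (Finset.univ.filter (fun t => φ t = j)).card ≤ f) :
    ConsecutiveFrequency f (S ∘ φ) := by
  intro c
  have index_eq {s t : Fin τ} (hs : c ∈ S (φ s)) (ht : c ∈ S (φ t)) : φ s = φ t :=
    hS.eq (Finset.not_disjoint_iff.2 ⟨c, hs, ht⟩)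
  constructor
  · rcases (Finset.univ.filter (fun t => c ∈ (S ∘ φ) t)).eq_empty_or_nonempty with hc | ⟨s, hs⟩
    · exact (Finset.card_eq_zero.2 hc).trans_le f.zero_le
    · refine (Finset.card_le_card fun t ht => ?_).trans (hcard (φ s))
      simp only [Function.comp_apply, Finset.mem_filter_univ] at hs ht ⊢
      exact index_eq ht hs
  · intro a b x ha hb hax hxb
    have hx : φ x = φ a := le_antisymm ((hφ hxb).trans_eq (index_eq hb ha)) (hφ hax)
    rwa [Function.comp_apply, hx]

section Blocks

variable {d : ℕ} (r : Fin d → ℕ)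

/-- The index of the block containing a given position, when `Fin (∑ i, r i)` is cut into
consecutive blocks of sizes `r 0, …, r (d - 1)`. -/
def blockIndex (t : Fin (∑ i, r i)) : Fin d :=
  (finSigmaFinEquiv.symm t).1

@[simp]
theorem blockIndex_finSigmaFinEquiv (p : (j : Fin d) × Fin (r j)) :
    blockIndex r (finSigmaFinEquiv p) = p.1 := by
  simp [blockIndex]

theorem sum_comp_blockIndex {M : Type*} [AddCommMonoid M] (g : Fin d → M) :
    ∑ t, g (blockIndex r t) = ∑ j, r j • g j := by
  rw [← finSigmaFinEquiv.sum_comp, Fintype.sum_sigma]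
  simp

theorem card_filter_blockIndex_eq (j : Fin d) :
    (Finset.univ.filter (fun t => blockIndex r t = j)).card = r j := by
  rw [Finset.card_filter, sum_comp_blockIndex r (fun i => if i = j then 1 else 0)]
  simp

theorem blockIndex_surjective {r : Fin d → ℕ} (hr : ∀ j, 0 < r j) :
    Function.Surjective (blockIndex r) :=
  fun j => ⟨finSigmaFinEquiv ⟨j, ⟨0, hr j⟩⟩, blockIndex_finSigmaFinEquiv r _⟩

theorem val_finSigmaFinEquiv_eq_sum_lt_add (p : (j : Fin d) × Fin (r j)) :
    (finSigmaFinEquiv p : ℕ) = ∑ i < p.1, r i + p.2 := by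
  have Iio_eq_map : Finset.Iio p.1 = Finset.univ.map (Fin.castLEEmb p.1.2.le) := by
    ext i
    simpa using ⟨fun hi => ⟨⟨i, hi⟩, rfl⟩, fun ⟨a, ha⟩ => ha ▸ a.2⟩
  rw [finSigmaFinEquiv_apply, Iio_eq_map, Finset.sum_map]
  rfl

theorem sum_lt_blockIndex_le (t : Fin (∑ i, r i)) : ∑ i < blockIndex r t, r i ≤ (t : ℕ) := by
  obtain ⟨p, rfl⟩ := finSigmaFinEquiv.surjective t
  rw [blockIndex_finSigmaFinEquiv, val_finSigmaFinEquiv_eq_sum_lt_add]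
  exact Nat.le_add_right _ _

theorem lt_sum_le_blockIndex (t : Fin (∑ i, r i)) :
    (t : ℕ) < ∑ i ≤ blockIndex r t, r i := by
  obtain ⟨p, rfl⟩ := finSigmaFinEquiv.surjective t
  rw [blockIndex_finSigmaFinEquiv, val_finSigmaFinEquiv_eq_sum_lt_add,
    ← Finset.sum_Iio_add_eq_sum_Iic]
  exact Nat.add_lt_add_left p.2.2 _

theorem blockIndex_monotone : Monotone (blockIndex r) := by
  intro s t hst
  by_contra! hlt
  have : (t : ℕ) < s := calc
    (t : ℕ) < ∑ i ≤ blockIndex r t, r i := lt_sum_le_blockIndex r t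
    _ ≤ ∑ i < blockIndex r s, r i :=
      Finset.sum_le_sum_of_subset fun _ hi =>
        Finset.mem_Iio.2 ((Finset.mem_Iic.1 hi).trans_lt hlt)
    _ ≤ s := sum_lt_blockIndex_le r s
  exact this.not_ge hst

end Blocks

/-- Block-repetition construction: repeating pairwise disjoint size-`k` committees
`S 0, …, S (d-1)` respectively `r 0, …, r (d-1)` times (with `1 ≤ r i ≤ f` and
`∑ i, r i = τ`) yields a consecutive `f`-frequency committee series of length `τ`
with committee size `k`, whose utilitarian quality is `∑ j, r j * β (S j)` and whose
egalitarian quality is `min_j β (S j)`, for every committee scoring function `β`. -/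
theorem block_repetition {m k f τ d : ℕ} (hd : 1 ≤ d) (hk : 1 ≤ k) (hf : 1 ≤ f)
    (S : Fin d → Finset (Fin m))
    (hSdisj : ∀ i j : Fin d, i ≠ j → S i ∩ S j = ∅)
    (hScard : ∀ i, (S i).card = k)
    (r : Fin d → ℕ) (hr1 : ∀ i, 1 ≤ r i) (hrf : ∀ i, r i ≤ f)
    (hrsum : ∑ i, r i = τ)
    (W : Fin τ → Finset (Fin m))
    (hW : ∀ (t : Fin τ) (j : Fin d),
        (∑ i ∈ Finset.univ.filter (fun i => i < j), r i) ≤ (t : ℕ) →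
        (t : ℕ) < (∑ i ∈ Finset.univ.filter (fun i => i ≤ j), r i) →
        W t = S j) :
    ConsecutiveFrequency f W ∧ (∀ t, (W t).card = k) ∧
    ∀ β : Finset (Fin m) → ℕ,
      (∑ t, β (W t)) = (∑ j, r j * β (S j)) ∧
      sInf (Set.range fun t => β (W t)) = sInf (Set.range fun j => β (S j)) := by
  subst hrsum
  obtain rfl : W = S ∘ blockIndex r := by
    funext t
    apply hW
    · simpa only [Finset.filter_gt_eq_Iio] using sum_lt_blockIndex_le r t
    · simpa only [Finset.filter_ge_eq_Iic] using lt_sum_le_blockIndex r t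
  have hS : Pairwise (Function.onFun Disjoint S) :=
    fun i j hij => Finset.disjoint_iff_inter_eq_empty.2 (hSdisj i j hij)
  refine ⟨consecutiveFrequency_comp_of_monotone hS (blockIndex_monotone r) fun j => ?_,
    fun t => hScard (blockIndex r t), fun β => ⟨?_, ?_⟩⟩
  · exact (card_filter_blockIndex_eq r j).trans_le (hrf j)
  · exact sum_comp_blockIndex r (fun j => β (S j))
  · exact congrArg sInf ((blockIndex_surjective hr1).range_comp (fun j => β (S j)))
end

section
/- (Intermediate-committee substitution step of the FPT(m) algorithm.) Let m, τ, k, f be natural numbers with f ≥ 1, and let W : Fin τ → Finset (Fin m) be a consecutive f-frequency committee series with committee size k. Fix an index x : Fin τ and set P := W' ∩ W'', where W' is W (x − 1) if (x : ℕ) ≥ 1 and ∅ otherwise, and W'' is W (x + 1) if (x : ℕ) + 1 < τ and ∅ otherwise. Let F : Finset (Fin m) be disjoint from ⋃ i, W i with F.card = k − P.card. Then the series W₁ defined by W₁ x = P ∪ F and W₁ i = W i for every i ≠ x is again a consecutive f-frequency committee series of length τ with committee size k, and its utilitarian quality equals ∑ i, β (W i) − β (W x) + β (P ∪ F) for every committee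 scoring function β. -/
section

open Finset Function

variable {ι α M : Type*}

theorem ordConnected_diff_singleton [PartialOrder ι] {s : Set ι} {x : ι} (hs : s.OrdConnected)
    (hx : ∀ a ∈ s, ∀ b ∈ s, a < x → ¬x < b) : (s \ {x}).OrdConnected := by
  refine ⟨fun a ha b hb y hy => ⟨hs.out ha.1 hb.1 hy, ?_⟩⟩
  rintro rfl
  exact hx a ha.1 b hb.1 (hy.1.lt_of_ne ha.2) (hy.2.lt_of_ne' hb.2)

theorem sum_apply_update [Fintype ι] [DecidableEq ι] [AddCommMonoid M] [PartialOrder M] [Sub M]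
    [OrderedSub M] [AddLeftReflectLE M] (g : α → M) (W : ι → α) (x : ι) (C : α) :
    ∑ i, g (update W x C i) = ∑ i, g (W i) - g (W x) + g C := by
  have sum_others : ∑ i ∈ univ.erase x, g (update W x C i) = ∑ i ∈ univ.erase x, g (W i) :=
    sum_congr rfl fun i hi => by rw [update_of_ne (ne_of_mem_erase hi)]
  rw [← add_sum_erase univ _ (mem_univ x), ← add_sum_erase univ (fun i => g (W i)) (mem_univ x),
    sum_others, update_self, add_tsub_cancel_left, add_comm]

section Occurrences

variable [Fintype ι] [DecidableEq α] {W : ι → Finset α} {x : ι} {c : α} {C : Finset α}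

/-- The positions in the committee series `W` at which the candidate `c` is a member; their number
is the frequency of `c`. -/
def occurrences (W : ι → Finset α) (c : α) : Finset ι := {i | c ∈ W i}

@[simp]
theorem mem_occurrences {i : ι} : i ∈ occurrences W c ↔ c ∈ W i := by
  simp [occurrences]

theorem occurrences_update_of_mem [DecidableEq ι] (hc : c ∈ C) :
    occurrences (update W x C) c = insert x (occurrences W c) := by
  ext i
  obtain rfl | hi := eq_or_ne i x <;> simp [*]

theorem occurrences_update_of_notMem [DecidableEq ι] (hc : c ∉ C) :
    occurrences (update W x C) c = (occurrences W c).erase x := by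
  ext i
  obtain rfl | hi := eq_or_ne i x <;> simp [*]

end Occurrences

/-- Consecutive `f`-frequency for committee series over an arbitrary candidate type and a finite
partially ordered type of positions; on `Fin τ` and `Fin m` it is `ConsecutiveFrequency`. -/
structure HasConsecutiveFrequency [Fintype ι] [Preorder ι] [DecidableEq α] (f : ℕ)
    (W : ι → Finset α) : Prop where
  card_le : ∀ c, #(occurrences W c) ≤ f
  ordConnected : ∀ c, (occurrences W c : Set ι).OrdConnected

theorem consecutiveFrequency_iff {m τ f : ℕ} {W : Fin τ → Finset (Fin m)} :
    ConsecutiveFrequency f W ↔ HasConsecutiveFrequency f W := by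
  constructor
  · exact fun h => ⟨fun c => (h c).1, fun c => ⟨fun a ha b hb y hy => mem_coe.2 <|
      mem_occurrences.2 <| (h c).2 a b y (mem_occurrences.1 ha) (mem_occurrences.1 hb) hy.1 hy.2⟩⟩
  · exact fun h c => ⟨h.card_le c, fun a b y ha hb hay hyb => mem_occurrences.1 <|
      (h.ordConnected c).out (mem_occurrences.2 ha) (mem_occurrences.2 hb) ⟨hay, hyb⟩⟩

namespace HasConsecutiveFrequency

section Preorder

variable [Fintype ι] [Preorder ι] [DecidableEq α] {f : ℕ} {W : ι → Finset α} {a b x : ι}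

theorem inter_subset (hW : HasConsecutiveFrequency f W) (hax : a ≤ x) (hxb : x ≤ b) :
    W a ∩ W b ⊆ W x := fun c hc =>
  mem_occurrences.1 <| (hW.ordConnected c).out (mem_occurrences.2 (mem_inter.1 hc).1)
    (mem_occurrences.2 (mem_inter.1 hc).2) ⟨hax, hxb⟩

theorem one_le_of_nonempty (hW : HasConsecutiveFrequency f W) (hx : (W x).Nonempty) : 1 ≤ f := by
  obtain ⟨c, hc⟩ := hx
  exact (one_le_card.2 ⟨x, mem_occurrences.2 hc⟩).trans (hW.card_le c)

end Preorder

theorem update_union [Fintype ι] [PartialOrder ι] [DecidableEq ι] [DecidableEq α] {f : ℕ}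
    {W : ι → Finset α} {x : ι} {P F : Finset α} (hW : HasConsecutiveFrequency f W)
    (hPx : P ⊆ W x) (hP : ∀ a b, a < x → x < b → W a ∩ W b ⊆ P)
    (hF : ∀ i, Disjoint F (W i)) (hf : F.Nonempty → 1 ≤ f) :
    HasConsecutiveFrequency f (update W x (P ∪ F)) := by
  suffices h : ∀ c, #(occurrences (update W x (P ∪ F)) c) ≤ f ∧
      (occurrences (update W x (P ∪ F)) c : Set ι).OrdConnected from
    ⟨fun c => (h c).1, fun c => (h c).2⟩
  intro c
  by_cases hcF : c ∈ F
  · have fresh : occurrences W c = ∅ := eq_empty_of_forall_notMem fun i hi =>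
      disjoint_left.1 (hF i) hcF (mem_occurrences.1 hi)
    rw [occurrences_update_of_mem (mem_union_right P hcF), fresh, insert_empty, coe_singleton]
    exact ⟨hf ⟨c, hcF⟩, Set.ordConnected_singleton⟩
  by_cases hcP : c ∈ P
  · rw [occurrences_update_of_mem (mem_union_left F hcP),
      insert_eq_of_mem (mem_occurrences.2 (hPx hcP))]
    exact ⟨hW.card_le c, hW.ordConnected c⟩
  · rw [occurrences_update_of_notMem (notMem_union.2 ⟨hcP, hcF⟩), coe_erase]
    refine ⟨card_erase_le.trans (hW.card_le c),
      ordConnected_diff_singleton (hW.ordConnected c) fun a ha b hb hax hxb => hcP ?_⟩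
    exact hP a b hax hxb (mem_inter.2 ⟨mem_occurrences.1 ha, mem_occurrences.1 hb⟩)

end HasConsecutiveFrequency

section Neighbours

variable [DecidableEq α] {τ f : ℕ} {W : Fin τ → Finset α} {x : Fin τ}

/-- The set `P` of candidates common to the two neighbours of the committee `W x`, where a missing
neighbour at either end of the series counts as `∅`. -/
def neighbourInter (W : Fin τ → Finset α) (x : Fin τ) : Finset α :=
  (if 1 ≤ (x : ℕ) then
      W ⟨(x : ℕ) - 1, Nat.lt_of_le_of_lt (Nat.sub_le _ _) x.isLt⟩ else ∅) ∩
    (if h : (x : ℕ) + 1 < τ then W ⟨(x : ℕ) + 1, h⟩ else ∅)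

theorem HasConsecutiveFrequency.neighbourInter_subset (hW : HasConsecutiveFrequency f W) :
    neighbourInter W x ⊆ W x := by
  unfold neighbourInter
  split_ifs
  · exact hW.inter_subset (Fin.le_def.2 (Nat.sub_le _ _)) (Fin.le_def.2 (Nat.le_succ _))
  all_goals simp only [inter_empty, empty_inter, empty_subset]

theorem HasConsecutiveFrequency.inter_subset_neighbourInter (hW : HasConsecutiveFrequency f W)
    {a b : Fin τ} (hax : a < x) (hxb : x < b) : W a ∩ W b ⊆ neighbourInter W x := by
  rw [Fin.lt_def] at hax hxb
  rw [neighbourInter, if_pos (by omega), dif_pos (by omega)]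
  refine subset_inter (hW.inter_subset ?_ ?_) (hW.inter_subset ?_ ?_) <;>
    rw [Fin.le_def] <;> dsimp only <;> omega

end Neighbours

theorem card_update_union [DecidableEq ι] [DecidableEq α] {W : ι → Finset α} {x : ι}
    {P F : Finset α} {k : ℕ} (hcard : ∀ i, #(W i) = k) (hPx : P ⊆ W x) (hF : Disjoint F (W x))
    (hFcard : #F = k - #P) (i : ι) : #(update W x (P ∪ F) i) = k := by
  obtain rfl | hi := eq_or_ne i x
  · rw [update_self, card_union_of_disjoint (hF.symm.mono_left hPx), hFcard]
    exact Nat.add_sub_cancel' (hcard i ▸ card_le_card hPx)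
  · rw [update_of_ne hi, hcard]

theorem intermediate_substitution_general [Fintype ι] [PartialOrder ι] [DecidableEq ι]
    [DecidableEq α] [AddCommMonoid M] [PartialOrder M] [Sub M] [OrderedSub M] [AddLeftReflectLE M]
    {k f : ℕ} {W : ι → Finset α} (hW : HasConsecutiveFrequency f W) (hcard : ∀ i, #(W i) = k)
    {x : ι} {P F : Finset α} (hPx : P ⊆ W x) (hP : ∀ a b, a < x → x < b → W a ∩ W b ⊆ P)
    (hF : ∀ i, Disjoint F (W i)) (hFcard : #F = k - #P) (β : Finset α → M) :
    HasConsecutiveFrequency f (update W x (P ∪ F)) ∧ (∀ i, #(update W x (P ∪ F) i) = k) ∧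
      ∑ i, β (update W x (P ∪ F) i) = ∑ i, β (W i) - β (W x) + β (P ∪ F) := by
  have one_le_of_fresh (hFne : F.Nonempty) : 1 ≤ f := by
    have hcard_pos : 0 < #(W x) := by
      rw [hcard x]
      exact (hFcard ▸ hFne.card_pos).trans_le (Nat.sub_le k #P)
    exact hW.one_le_of_nonempty (card_pos.1 hcard_pos)
  exact ⟨hW.update_union hPx hP hF one_le_of_fresh, card_update_union hcard hPx (hF x) hFcard,
    sum_apply_update β W x (P ∪ F)⟩

end

/-- Intermediate-committee substitution: replacing the committee at position `x` of a
consecutive `f`-frequency series by `P ∪ F`, where `P` is the intersection of the two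
neighboring committees (or `∅` at a boundary) and `F` consists of `k - |P|` fresh
candidates, yields again a consecutive `f`-frequency series with committee size `k`,
and its utilitarian quality is `∑ i, β (W i) - β (W x) + β (P ∪ F)`. -/
theorem intermediate_substitution {m τ k f : ℕ} (hf : 1 ≤ f)
    (W : Fin τ → Finset (Fin m))
    (hfreq : ConsecutiveFrequency f W) (hcard : ∀ i, (W i).card = k)
    (x : Fin τ) (P : Finset (Fin m))
    (hP : P =
      (if 1 ≤ (x : ℕ) then
          W ⟨(x : ℕ) - 1, Nat.lt_of_le_of_lt (Nat.sub_le _ _) x.isLt⟩ else ∅) ∩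
      (if h : (x : ℕ) + 1 < τ then W ⟨(x : ℕ) + 1, h⟩ else ∅))
    (F : Finset (Fin m)) (hFdisj : ∀ i, F ∩ W i = ∅) (hFcard : F.card = k - P.card)
    (W₁ : Fin τ → Finset (Fin m))
    (hW₁x : W₁ x = P ∪ F) (hW₁ : ∀ i, i ≠ x → W₁ i = W i)
    (β : Finset (Fin m) → ℕ) :
    ConsecutiveFrequency f W₁ ∧ (∀ i, (W₁ i).card = k) ∧
    (∑ i, β (W₁ i)) = (∑ i, β (W i)) - β (W x) + β (P ∪ F) := by
  obtain rfl : W₁ = Function.update W x (P ∪ F) := Function.eq_update_iff.2 ⟨hW₁x, hW₁⟩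
  obtain rfl : P = neighbourInter W x := hP
  rw [consecutiveFrequency_iff] at hfreq ⊢
  exact intermediate_substitution_general hfreq hcard hfreq.neighbourInter_subset
    (fun _ _ => hfreq.inter_subset_neighbourInter)
    (fun i => Finset.disjoint_iff_inter_eq_empty.2 (hFdisj i)) hFcard β
end

section
/- (Forward correctness claim for the polynomial-multiplication algorithm, utilitarian case.) Fix m, k ≥ 1 and a committee scoring function β : Finset (Fin m) → ℕ, and let p[s,j,ℓ] be the recursively defined polynomials described in the context. Then for all j ≥ 1 and all s, ℓ : ℕ: if p[s,j,ℓ] ≠ 0, then there exists a Finset 𝒮 of committees with 𝒮.card = j, whose members are pairwise disjoint and each of cardinality k, such that the union of the members of 𝒮 has cardinality s and ∑_{S ∈ 𝒮} β S ≥ ℓ. -/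
/-!
Every exponent in the support of `p[s,j,ℓ]` is `χ` of the union of a family of `j` disjoint
committees, by induction on `j`.  In the inductive step such an exponent is `χ Y + χ U`, where `U`
is the union of a family of `j - 1` committees, and its Hamming weight is `|Y| + |U|`.  So it is a
sum of powers of two whose number of terms equals its Hamming weight.  A repeated term
`2 ^ i + 2 ^ i` could be merged into `2 ^ (i + 1)`, giving fewer terms than the Hamming weight;
hence no term repeats, that is, `Y` and `U` are disjoint.
-/

open Polynomial

/-- The characteristic-vector encoding of a set of candidates. -/
def chi {m : ℕ} (Y : Finset (Fin m)) : ℕ := ∑ i ∈ Y, 2 ^ (i : ℕ)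

/-- The Hamming weight of a natural number: the number of ones in its binary
representation. -/
def hammingWeight (e : ℕ) : ℕ := (Nat.digits 2 e).sum

/-- The Hamming projection of a polynomial to `s`: keep exactly the monomials whose
exponent has Hamming weight `s`. -/
noncomputable def hammingProj (s : ℕ) (p : Polynomial ℕ) : Polynomial ℕ :=
  ∑ e ∈ p.support.filter (fun e => hammingWeight e = s), C (p.coeff e) * X ^ e

/-- The representative polynomial: change all nonzero coefficients to `1`. -/
noncomputable def reprPoly (p : Polynomial ℕ) : Polynomial ℕ :=
  ∑ e ∈ p.support, (X : Polynomial ℕ) ^ e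

/-- The recursively defined polynomials `p[s,j,ℓ]` of the polynomial-multiplication
algorithm (utilitarian case), with the number `j` of committees as first argument. -/
noncomputable def polyP (m k : ℕ) (β : Finset (Fin m) → ℕ) :
    ℕ → ℕ → ℕ → Polynomial ℕ
  | 0, _, _ => 0
  | 1, s, ℓ =>
      if s = k then
        ∑ Y ∈ Finset.univ.filter (fun Y : Finset (Fin m) => Y.card = k ∧ ℓ ≤ β Y),
          (X : Polynomial ℕ) ^ chi Y
      else 0
  | (j + 2), s, ℓ =>
      reprPoly (hammingProj s
        (∑ Y ∈ Finset.univ.filter (fun Y : Finset (Fin m) => Y.card = k),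
          (X : Polynomial ℕ) ^ chi Y * polyP m k β (j + 1) (s - k) (ℓ - β Y)))

lemma sum_digits_add_le (p : ℕ) [Fact p.Prime] (a b : ℕ) :
    (Nat.digits p (a + b)).sum ≤ (Nat.digits p a).sum + (Nat.digits p b).sum := by
  -- Legendre's formula turns the claim into the divisibility of `(a + b)!` by `a! * b!`.
  have hval : padicValNat p a.factorial + padicValNat p b.factorial ≤
      padicValNat p (a + b).factorial := by
    rw [← padicValNat.mul a.factorial_ne_zero b.factorial_ne_zero]
    exact padicValNat_dvd_iff_le (a + b).factorial_ne_zero |>.mp <|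
      pow_padicValNat_dvd.trans (Nat.factorial_mul_factorial_dvd_factorial_add a b)
  have hlegendre := Nat.mul_le_mul_left (p - 1) hval
  simp only [mul_add, sub_one_mul_padicValNat_factorial] at hlegendre
  have ha := Nat.digit_sum_le p a
  have hb := Nat.digit_sum_le p b
  have hab := Nat.digit_sum_le p (a + b)
  lia

lemma hammingWeight_add_le (a b : ℕ) :
    hammingWeight (a + b) ≤ hammingWeight a + hammingWeight b :=
  sum_digits_add_le 2 a b

lemma hammingWeight_two_pow (i : ℕ) : hammingWeight (2 ^ i) = 1 := by
  simpa [hammingWeight] using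
    congrArg List.sum (Nat.digits_base_pow_mul (k := i) one_lt_two one_pos)

lemma hammingWeight_sum_two_pow_le_card (t : Multiset ℕ) :
    hammingWeight (t.map (2 ^ ·)).sum ≤ t.card := by
  induction t using Multiset.induction_on with
  | empty => simp [hammingWeight]
  | cons i t ih =>
    rw [Multiset.map_cons, Multiset.sum_cons, Multiset.card_cons]
    calc hammingWeight (2 ^ i + (t.map (2 ^ ·)).sum)
        ≤ hammingWeight (2 ^ i) + hammingWeight (t.map (2 ^ ·)).sum := hammingWeight_add_le _ _
      _ ≤ t.card + 1 := by rw [hammingWeight_two_pow, add_comm]; gcongr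

lemma nodup_of_card_le_hammingWeight_sum_two_pow {t : Multiset ℕ}
    (ht : t.card ≤ hammingWeight (t.map (2 ^ ·)).sum) : t.Nodup := by
  refine Multiset.nodup_iff_ne_cons_cons.mpr ?_
  rintro i u rfl
  have hmerge : ((i ::ₘ i ::ₘ u).map (2 ^ ·)).sum = (((i + 1) ::ₘ u).map (2 ^ ·)).sum := by
    simp only [Multiset.map_cons, Multiset.sum_cons]
    ring
  have hweight := hammingWeight_sum_two_pow_le_card ((i + 1) ::ₘ u)
  rw [← hmerge] at hweight
  simp only [Multiset.card_cons] at ht hweight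
  lia

lemma disjoint_of_card_add_card_le_hammingWeight {m : ℕ} {Y U : Finset (Fin m)}
    (h : Y.card + U.card ≤ hammingWeight (chi Y + chi U)) : Disjoint Y U := by
  have hsum : (((Y.val + U.val).map Fin.val).map (2 ^ ·)).sum = chi Y + chi U := by
    rw [Multiset.map_map, Multiset.map_add, Multiset.sum_add]
    rfl
  have hnodup : ((Y.val + U.val).map Fin.val).Nodup := by
    apply nodup_of_card_le_hammingWeight_sum_two_pow
    rw [hsum]
    simpa using h
  exact Finset.disjoint_val.mp (Multiset.nodup_add.mp hnodup.of_map).2.2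

lemma chi_union_of_disjoint {m : ℕ} {Y U : Finset (Fin m)} (h : Disjoint Y U) :
    chi (Y ∪ U) = chi Y + chi U :=
  Finset.sum_union h

lemma exists_add_of_mem_support_sum_X_pow_mul {R ι : Type*} [Semiring R] {F : Finset ι}
    {a : ι → ℕ} {q : ι → R[X]} {e : ℕ} (he : e ∈ (∑ i ∈ F, X ^ a i * q i).support) :
    ∃ i ∈ F, ∃ d ∈ (q i).support, a i + d = e := by
  rw [mem_support_iff, finsetSum_coeff] at he
  obtain ⟨i, hi, hcoeff⟩ := Finset.exists_ne_zero_of_sum_ne_zero he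
  rw [coeff_X_pow_mul', ite_ne_right_iff] at hcoeff
  obtain ⟨hle, hne⟩ := hcoeff
  exact ⟨i, hi, e - a i, mem_support_iff.mpr hne, Nat.add_sub_cancel' hle⟩

lemma support_reprPoly (p : ℕ[X]) : (reprPoly p).support = p.support := by
  ext e
  simp [reprPoly, finsetSum_coeff, coeff_X_pow]

lemma support_hammingProj (s : ℕ) (p : ℕ[X]) :
    (hammingProj s p).support = p.support.filter (hammingWeight · = s) := by
  ext e
  simp +contextual [hammingProj, finsetSum_coeff, coeff_X_pow]

lemma exists_of_mem_support_polyP_one {m k : ℕ} {β : Finset (Fin m) → ℕ} {s ℓ e : ℕ}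
    (he : e ∈ (polyP m k β 1 s ℓ).support) :
    s = k ∧ ∃ Y : Finset (Fin m), Y.card = k ∧ ℓ ≤ β Y ∧ chi Y = e := by
  rw [polyP] at he
  split_ifs at he with hs
  · obtain ⟨Y, hY, d, hd, rfl⟩ :=
      exists_add_of_mem_support_sum_X_pow_mul (q := fun _ => 1) (by simpa only [mul_one] using he)
    obtain rfl : d = 0 := by simpa [coeff_one] using hd
    obtain ⟨hYk, hYβ⟩ := (Finset.mem_filter.mp hY).2
    exact ⟨hs, Y, hYk, hYβ, rfl⟩
  · simp at he

lemma exists_of_mem_support_polyP_add_two {m k : ℕ} {β : Finset (Fin m) → ℕ} {j s ℓ e : ℕ}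
    (he : e ∈ (polyP m k β (j + 2) s ℓ).support) :
    hammingWeight e = s ∧ ∃ Y : Finset (Fin m), Y.card = k ∧
      ∃ d ∈ (polyP m k β (j + 1) (s - k) (ℓ - β Y)).support, chi Y + d = e := by
  rw [polyP, support_reprPoly, support_hammingProj, Finset.mem_filter] at he
  obtain ⟨hsupp, hweight⟩ := he
  obtain ⟨Y, hY, d, hd, hadd⟩ := exists_add_of_mem_support_sum_X_pow_mul hsupp
  exact ⟨hweight, Y, (Finset.mem_filter.mp hY).2, d, hd, hadd⟩

/-- A family of pairwise disjoint committees of size `k`, the kind of family whose unions are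
encoded by the exponents of `polyP`. -/
structure IsDisjointCommittees {α : Type*} (k : ℕ) (𝒮 : Finset (Finset α)) : Prop where
  pairwiseDisjoint : (𝒮 : Set (Finset α)).PairwiseDisjoint id
  card_eq : ∀ S ∈ 𝒮, S.card = k

namespace IsDisjointCommittees

variable {α : Type*} {k : ℕ} {𝒮 : Finset (Finset α)} {Y : Finset α}

lemma singleton (hY : Y.card = k) : IsDisjointCommittees k {Y} where
  pairwiseDisjoint := by simp
  card_eq := by simpa using hY

variable [DecidableEq α]

lemma insert (h𝒮 : IsDisjointCommittees k 𝒮) (hY : Y.card = k)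
    (hdisj : Disjoint Y (𝒮.biUnion id)) : IsDisjointCommittees k (insert Y 𝒮) where
  pairwiseDisjoint := by
    rw [Finset.coe_insert]
    exact h𝒮.pairwiseDisjoint.insert fun S hS _ =>
      (Finset.disjoint_biUnion_right Y 𝒮 id).mp hdisj S hS
  card_eq := (Finset.forall_mem_insert _ _ _).mpr ⟨hY, h𝒮.card_eq⟩

lemma card_biUnion (h𝒮 : IsDisjointCommittees k 𝒮) : (𝒮.biUnion id).card = 𝒮.card * k := by
  rw [Finset.card_biUnion h𝒮.pairwiseDisjoint]
  exact Finset.sum_const_nat h𝒮.card_eq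

end IsDisjointCommittees

lemma notMem_of_disjoint_biUnion {α : Type*} [DecidableEq α] {𝒮 : Finset (Finset α)}
    {Y : Finset α} (hY : Y.Nonempty) (hdisj : Disjoint Y (𝒮.biUnion id)) : Y ∉ 𝒮 := fun hmem =>
  hY.ne_empty <| disjoint_self.mp <| (Finset.disjoint_biUnion_right Y 𝒮 id).mp hdisj Y hmem

lemma exists_isDisjointCommittees_of_mem_support_polyP {m k : ℕ} (hk : 1 ≤ k)
    {β : Finset (Fin m) → ℕ} {j s ℓ e : ℕ} (he : e ∈ (polyP m k β (j + 1) s ℓ).support) :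
    ∃ 𝒮 : Finset (Finset (Fin m)), IsDisjointCommittees k 𝒮 ∧ 𝒮.card = j + 1 ∧
      (𝒮.biUnion id).card = s ∧ ℓ ≤ ∑ S ∈ 𝒮, β S ∧ chi (𝒮.biUnion id) = e := by
  induction j generalizing s ℓ e with
  | zero =>
    obtain ⟨rfl, Y, hY, hβ, rfl⟩ := exists_of_mem_support_polyP_one he
    exact ⟨{Y}, .singleton hY, by simp, by simpa using hY, by simpa using hβ, by simp⟩
  | succ j ih =>
    obtain ⟨hweight, Y, hY, d, hd, rfl⟩ := exists_of_mem_support_polyP_add_two he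
    obtain ⟨𝒮, h𝒮, hcard, hunion, hβ, rfl⟩ := ih hd
    -- The union of `𝒮` has `s - k` elements and is nonempty, so `s - k` is not truncated.
    have hs : Y.card + (𝒮.biUnion id).card = s := by
      have hpos : 0 < (𝒮.biUnion id).card := by
        rw [h𝒮.card_biUnion, hcard]
        positivity
      lia
    have hdisj : Disjoint Y (𝒮.biUnion id) :=
      disjoint_of_card_add_card_le_hammingWeight (hs.trans hweight.symm).le
    have hnotMem : Y ∉ 𝒮 :=
      notMem_of_disjoint_biUnion (Finset.card_pos.mp (hY ▸ hk)) hdisj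
    refine ⟨insert Y 𝒮, h𝒮.insert hY hdisj, ?_, ?_, ?_, ?_⟩
    · rw [Finset.card_insert_of_notMem hnotMem, hcard]
    · rw [Finset.biUnion_insert, id, Finset.card_union_of_disjoint hdisj, hs]
    · rw [Finset.sum_insert hnotMem]
      exact tsub_le_iff_left.mp hβ
    · rw [Finset.biUnion_insert, id, chi_union_of_disjoint hdisj]

/-- Forward correctness of the polynomial-multiplication algorithm (utilitarian case):
if `p[s,j,ℓ] ≠ 0` then there are `j` pairwise disjoint size-`k` committees whose union
has `s` candidates and whose total score is at least `ℓ`. -/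
theorem polyP_forward {m k : ℕ} (hm : 1 ≤ m) (hk : 1 ≤ k) (β : Finset (Fin m) → ℕ)
    (j s ℓ : ℕ) (hj : 1 ≤ j) (hne : polyP m k β j s ℓ ≠ 0) :
    ∃ 𝒮 : Finset (Finset (Fin m)),
      𝒮.card = j ∧
      (∀ S ∈ 𝒮, ∀ T ∈ 𝒮, S ≠ T → S ∩ T = ∅) ∧
      (∀ S ∈ 𝒮, S.card = k) ∧
      (𝒮.biUnion id).card = s ∧
      ℓ ≤ ∑ S ∈ 𝒮, β S := by
  obtain ⟨j, rfl⟩ := Nat.exists_eq_add_of_le' hj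
  obtain ⟨e, he⟩ := support_nonempty.mpr hne
  obtain ⟨𝒮, h𝒮, hcard, hunion, hβ, -⟩ := exists_isDisjointCommittees_of_mem_support_polyP hk he
  exact ⟨𝒮, hcard,
    fun S hS T hT hST => Finset.disjoint_iff_inter_eq_empty.mp (h𝒮.pairwiseDisjoint hS hT hST),
    h𝒮.card_eq, hunion, hβ⟩
end

section
/- (Success probability of a uniformly random coloring; Lemma 5.4 of Cygan et al. as used in the randomized FPT(τ) algorithm.) Let U be a finite type and X : Finset U with X.card = n and n ≥ 1. Then the number of functions χ : U → Fin n that are injective on X is at least Real.exp (−(n : ℝ)) * (n : ℝ)^(Fintype.card U); equivalently, a function χ : U → Fin n chosen uniformly at random colors the elements of X with pairwise distinct colors with probability at least e^(−n). -/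
/-!
A coloring with `n` colors that is injective on a set `X` of `k ≤ n` points is an embedding of `X`
together with an arbitrary coloring of the complement, so a random coloring is injective on `X`
with probability `n (n - 1) ⋯ (n - k + 1) / n ^ k = ∏ i < k, (1 - i / n)`. Each factor is
nondecreasing in `n`, so the worst case is `n = k`, where the probability is `k! / k ^ k`; this is
at least `exp (-k)` because `k ^ k / k!` is a single term of the exponential series at `k`.
-/

open Finset
open scoped Nat

/-- Splitting a map that is injective on `s` into its restrictions to `s`, an embedding, and to the
complement of `s`, an arbitrary map. -/
noncomputable def injOnEquivEmbeddingProd {α β : Type*} (s : Set α) :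
    {f : α → β // s.InjOn f} ≃ (s ↪ β) × ({a // a ∉ s} → β) := by
  classical
  exact calc {f : α → β // s.InjOn f}
    _ ≃ {p : (s → β) × ({a // a ∉ s} → β) // p.1.Injective} :=
      (Equiv.piEquivPiSubtypeProd (· ∈ s) fun _ ↦ β).subtypeEquiv fun _ ↦ Set.injOn_iff_injective
    _ ≃ {g : s → β // g.Injective} × ({a // a ∉ s} → β) :=
      Equiv.prodSubtypeFstEquivSubtypeProd
    _ ≃ (s ↪ β) × ({a // a ∉ s} → β) :=
      (Equiv.subtypeInjectiveEquivEmbedding s β).prodCongr (Equiv.refl _)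

theorem card_injOn_eq_descFactorial_mul_pow {α β : Type*} [Fintype α] [Fintype β] (s : Finset α) :
    Nat.card {f : α → β // Set.InjOn f s} =
      (Fintype.card β).descFactorial #s * Fintype.card β ^ (Fintype.card α - #s) := by
  classical
  have card_embedding : Nat.card (s ↪ β) = (Fintype.card β).descFactorial #s := by
    rw [Nat.card_eq_fintype_card, Fintype.card_embedding_eq, Fintype.card_coe]
  have card_compl : Nat.card {a // a ∉ s} = Fintype.card α - #s := by
    rw [Nat.card_eq_fintype_card, Fintype.card_subtype_compl, Fintype.card_coe]
  calc Nat.card {f : α → β // Set.InjOn f s}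
    _ = Nat.card (s ↪ β) * Nat.card ({a // a ∉ s} → β) :=
      (Nat.card_congr (injOnEquivEmbeddingProd (s : Set α))).trans (Nat.card_prod _ _)
    _ = (Fintype.card β).descFactorial #s * Fintype.card β ^ (Fintype.card α - #s) := by
      rw [card_embedding, Nat.card_fun, card_compl, Nat.card_eq_fintype_card]

theorem factorial_mul_pow_le_descFactorial_mul_pow {k n : ℕ} (hkn : k ≤ n) :
    k ! * n ^ k ≤ n.descFactorial k * k ^ k := by
  have factor_le (i : ℕ) : (k - i) * n ≤ (n - i) * k := by
    rw [Nat.sub_mul, Nat.sub_mul, Nat.mul_comm k n]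
    gcongr
  calc k ! * n ^ k
    _ = ∏ i ∈ range k, (k - i) * n := by
      rw [← prod_mul_pow_card, card_range, ← Nat.descFactorial_eq_prod_range,
        Nat.descFactorial_self]
    _ ≤ ∏ i ∈ range k, (n - i) * k := prod_le_prod' fun i _ ↦ factor_le i
    _ = n.descFactorial k * k ^ k := by
      rw [← prod_mul_pow_card, card_range, ← Nat.descFactorial_eq_prod_range]

theorem exp_neg_mul_pow_le_descFactorial {k n : ℕ} (hkn : k ≤ n) :
    Real.exp (-k) * n ^ k ≤ n.descFactorial k := by
  have pow_le_exp : (k : ℝ) ^ k ≤ Real.exp k * k ! :=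
    (div_le_iff₀ (by positivity)).mp (Real.pow_div_factorial_le_exp _ k.cast_nonneg k)
  rw [Real.exp_neg, inv_mul_le_iff₀ (Real.exp_pos _)]
  refine le_of_mul_le_mul_left ?_ (Nat.cast_pos.mpr k.factorial_pos)
  calc (k ! : ℝ) * n ^ k
    _ ≤ n.descFactorial k * k ^ k := mod_cast factorial_mul_pow_le_descFactorial_mul_pow hkn
    _ ≤ n.descFactorial k * (Real.exp k * k !) := by gcongr
    _ = k ! * (Real.exp k * n.descFactorial k) := by ring

theorem card_injOn_colorings_ge_general {U C : Type*} [Fintype U] [Fintype C] (X : Finset U)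
    (hX : #X ≤ Fintype.card C) :
    Real.exp (-#X) * (Fintype.card C : ℝ) ^ Fintype.card U ≤
      (Nat.card {χ : U → C // Set.InjOn χ X} : ℝ) := by
  set k := #X
  set m := Fintype.card U
  set n := Fintype.card C
  calc Real.exp (-k) * (n : ℝ) ^ m
    _ = Real.exp (-k) * n ^ k * n ^ (m - k) := by
      rw [mul_assoc, pow_mul_pow_sub _ X.card_le_univ]
    _ ≤ n.descFactorial k * n ^ (m - k) := by
      gcongr
      exact exp_neg_mul_pow_le_descFactorial hX
    _ = Nat.card {χ : U → C // Set.InjOn χ X} := by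
      rw [card_injOn_eq_descFactorial_mul_pow]
      norm_cast

/-- Success probability of a uniformly random coloring: the number of colorings
`χ : U → Fin n` injective on a fixed set `X` of cardinality `n` is at least
`e^(-n) * n^(|U|)`; equivalently a uniformly random coloring is injective on `X`
with probability at least `e^(-n)`. -/
theorem card_injOn_colorings_ge {U : Type*} [Fintype U] (X : Finset U) (n : ℕ)
    (hn : 1 ≤ n) (hX : X.card = n) :
    Real.exp (-(n : ℝ)) * (n : ℝ) ^ (Fintype.card U) ≤
      (Nat.card {χ : U → Fin n // Set.InjOn χ ↑X} : ℝ) := by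
  simpa only [hX, Fintype.card_fin] using
    card_injOn_colorings_ge_general (C := Fin n) X (hX.trans (Fintype.card_fin n).symm).le
end
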